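/- Let φ be holomorphic and injective on the exterior disk Δ = {z ∈ ℂ : |z| > 1}, with Laurent expansion φ(z) = z + φ₀ + ∑_{k≥1} φ_{-k} z^{-k} at infinity. Then for every r > 1 the sequence n ↦ E_n(r) is nondecreasing: E_n(r) ≤ E_{n+1}(r) for all n ≥ 1. -/

import Mathlib

open MeasureTheory Filter

/-- The partition function `Z_n(γ_r)` of the Coulomb gas (at `β = 2`) on the analytic
curve `γ_r`, the image of the unit circle under `φ_r(z) = φ(rz)/r`:
`Z_n(r) = (1/(n! r^{n(n-1)})) ∫_{[−π,π]^n} ∏_{μ<ν} |φ(re^{iθ_μ}) − φ(re^{iθ_ν})|²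
∏_μ |φ'(re^{iθ_μ})| dθ`. -/
noncomputable def Zn (φ : ℂ → ℂ) (n : ℕ) (r : ℝ) : ℝ :=
  (1 / (n.factorial * r ^ (n * (n - 1)))) *
    ∫ θ in Set.pi Set.univ (fun _ : Fin n => Set.Icc (-Real.pi) Real.pi),
      (∏ p ∈ Finset.univ.filter (fun p : Fin n × Fin n => p.1 < p.2),
        ‖φ ((r : ℂ) * Complex.exp (Complex.I * (θ p.1 : ℂ)))
          - φ ((r : ℂ) * Complex.exp (Complex.I * (θ p.2 : ℂ)))‖ ^ 2) *
      ∏ μ, ‖deriv φ ((r : ℂ) * Complex.exp (Complex.I * (θ μ : ℂ)))‖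

/-- `E_n(r) = log(Z_n(r)/(2π)^n)`, the "finite `n` Loewner energy" of `γ_r`. -/
noncomputable def En (φ : ℂ → ℂ) (n : ℕ) (r : ℝ) : ℝ :=
  Real.log (Zn φ n r / (2 * Real.pi) ^ n)

/-!
By Andréief's identity the partition function `Z_n`, up to the power of `r`, is the determinant
`D_n` of the Gram matrix of `1, φ, …, φ^(n-1)` with respect to the weight `|φ'|` on the circle of
radius `r`. The ratio `D_{n+1} / D_n` is at least the minimum of `∫ |P(φ)|² |φ'| dθ` over monic
polynomials `P` of degree `n`. Since `φ(z) / z → 1`, the holomorphic function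
`(P(φ(z)) / z^n)² φ'(z)` tends to `1` at infinity; the mean value property in the exterior domain
therefore bounds this minimum below by `2π r^(2n)`, that is, `2π Z_n ≤ Z_{n+1}`.
-/

section Determinants

open Matrix

variable {𝕜 : Type*} [RCLike 𝕜] {α : Type*} [MeasurableSpace α] {μ : Measure α} [SigmaFinite μ]
  {ι : Type*} [Fintype ι] [DecidableEq ι]

lemma integrable_det_pi {h : ι → ι → α → 𝕜} (hh : ∀ i j, Integrable (h i j) μ) :
    Integrable (fun x : ι → α => (of fun i j => h i j (x j)).det) (Measure.pi fun _ => μ) := by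
  simp only [det_apply', of_apply]
  exact integrable_finsetSum _ fun σ _ => (Integrable.fintype_prod fun j => hh (σ j) j).const_mul _

lemma integral_det_pi {h : ι → ι → α → 𝕜} (hh : ∀ i j, Integrable (h i j) μ) :
    ∫ x : ι → α, (of fun i j => h i j (x j)).det ∂(Measure.pi fun _ => μ) =
      (of fun i j => ∫ x, h i j x ∂μ).det := by
  simp only [det_apply', of_apply]
  rw [integral_finsetSum _ fun σ _ =>
    (Integrable.fintype_prod fun j => hh (σ j) j).const_mul _]
  simp only [integral_const_mul, integral_fintype_prod_eq_prod fun j => h (_ : ι) j]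

lemma det_mul_det_eq_sum_perm {R : Type*} [CommRing R] (A B : Matrix ι ι R) :
    A.det * B.det = ∑ σ : Equiv.Perm ι,
      (Equiv.Perm.sign σ : R) * (of fun i j => A (σ j) j * B i j).det := by
  simp only [det_mul_row, ← mul_assoc, ← Finset.sum_mul, ← det_apply']

/-- **Andréief's identity** -/
theorem integral_det_mul_det {f g : ι → α → 𝕜}
    (hfg : ∀ i j, Integrable (fun x => f i x * g j x) μ) :
    ∫ x : ι → α, (of fun i j => f i (x j)).det * (of fun i j => g i (x j)).det
        ∂(Measure.pi fun _ => μ) =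
      (Fintype.card ι).factorial * (of fun i j => ∫ x, f i x * g j x ∂μ).det := by
  simp only [det_mul_det_eq_sum_perm, of_apply]
  rw [integral_finsetSum _ fun σ _ => (integrable_det_pi fun i j => hfg (σ j) i).const_mul _]
  simp only [integral_const_mul, integral_det_pi fun i _ => hfg (_ : ι) i]
  set M : Matrix ι ι 𝕜 := of fun i j => ∫ x, f i x * g j x ∂μ
  have hperm (σ : Equiv.Perm ι) :
      (Equiv.Perm.sign σ : 𝕜) * (of fun i j => ∫ x, f (σ j) x * g i x ∂μ).det = M.det := by
    have hrows : (of fun i j => ∫ x, f (σ j) x * g i x ∂μ) = (M.submatrix σ id)ᵀ := rfl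
    rw [hrows, det_transpose, det_permute, ← mul_assoc, ← Int.cast_mul, Int.units_coe_mul_self,
      Int.cast_one, one_mul]
  simp only [hperm, Finset.sum_const, Finset.card_univ, Fintype.card_perm, nsmul_eq_mul]

open scoped ComplexOrder in
theorem mul_det_submatrix_succAbove_le_det {n : ℕ} {G : Matrix (Fin (n + 1)) (Fin (n + 1)) 𝕜}
    {c : 𝕜} (i : Fin (n + 1)) (hG : ∀ v, c * (star (v i) * v i) ≤ star v ⬝ᵥ G *ᵥ v)
    (hdet : 0 < (G.submatrix i.succAbove i.succAbove).det) :
    c * (G.submatrix i.succAbove i.succAbove).det ≤ G.det := by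
  -- Test the quadratic form on the `i`-th column of the adjugate, which `G` sends to `det G • eᵢ`.
  set d := (G.submatrix i.succAbove i.succAbove).det
  set v : Fin (n + 1) → 𝕜 := fun j => G.adjugate j i
  have hvi : v i = d := by
    simp [v, d, adjugate_fin_succ_eq_det_submatrix, ← two_mul]
  have hGv : G *ᵥ v = Pi.single i G.det := by
    ext j
    have := congrFun (congrFun G.mul_adjugate j) i
    simpa [mul_apply, mulVec, dotProduct, Matrix.one_apply, Pi.single_apply] using this
  have hd : star d = d := IsSelfAdjoint.of_nonneg hdet.le
  have key := hG v
  rw [hGv, dotProduct_single, Pi.star_apply, hvi, hd] at key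
  refine le_of_mul_le_mul_left ?_ hdet
  calc d * (c * d) = c * (d * d) := by ring
    _ ≤ d * G.det := key

end Determinants

section CoulombGas

open Matrix

variable {α : Type*} [MeasurableSpace α] (μ : Measure α) (f : α → ℂ) (w : α → ℝ)

/-- The partition function at `β = 2` of the Coulomb gas of `n` particles `f (x i)`, the `x i` being
distributed according to the measure with density `w` relative to `μ`. It abstracts the integral in
`Zn` from the curve; the factor `1 / n!` is included, the power of `r` is not. -/
noncomputable def coulombPartitionFunction (n : ℕ) : ℝ :=
  (n.factorial : ℝ)⁻¹ * ∫ x : Fin n → α,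
    (∏ p ∈ Finset.univ.filter (fun p : Fin n × Fin n => p.1 < p.2), ‖f (x p.1) - f (x p.2)‖ ^ 2) *
      ∏ i, w (x i) ∂(Measure.pi fun _ => μ)

/-- The matrix of moments `∫ w · conj(f)^i · f^j`, i.e. the Gram matrix of the monomials
`1, …, f^(n-1)` in the weighted `L²` space. The weight is attached to the second factor so that
the entries have the shape required by `integral_det_mul_det`. -/
noncomputable def momentMatrix (n : ℕ) : Matrix (Fin n) (Fin n) ℂ :=
  of fun i j => ∫ x, star (f x) ^ (i : ℕ) * (w x * f x ^ (j : ℕ)) ∂μ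

variable {μ f w}

lemma momentMatrix_submatrix_last_succAbove (n : ℕ) :
    (momentMatrix μ f w (n + 1)).submatrix (Fin.last n).succAbove (Fin.last n).succAbove =
      momentMatrix μ f w n := by
  ext i j
  simp [momentMatrix]

lemma norm_det_vandermonde_sq {𝕜 : Type*} [NormedField 𝕜] {n : ℕ} (v : Fin n → 𝕜) :
    ‖(vandermonde v).det‖ ^ 2 =
      ∏ p ∈ Finset.univ.filter (fun p : Fin n × Fin n => p.1 < p.2), ‖v p.1 - v p.2‖ ^ 2 := by
  simp only [det_vandermonde, norm_prod, ← Finset.prod_pow, Finset.prod_filter,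
    Fintype.prod_prod_type, norm_sub_rev (v _) (v _)]
  simp only [← Finset.prod_filter, Finset.filter_lt_eq_Ioi]

lemma det_star_pow_mul_det_weighted_pow {n : ℕ} (v : Fin n → ℂ) (u : Fin n → ℝ) :
    (of fun i j : Fin n => star (v j) ^ (i : ℕ)).det *
        (of fun i j : Fin n => u j * v j ^ (i : ℕ)).det =
      ((‖(vandermonde v).det‖ ^ 2 * ∏ i, u i : ℝ) : ℂ) := by
  have hstar : (of fun i j : Fin n => star (v j) ^ (i : ℕ)) = (vandermonde v)ᴴ := by
    ext i j
    simp [vandermonde]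
  have hweight : (of fun i j : Fin n => u j * v j ^ (i : ℕ)).det =
      (∏ i, (u i : ℂ)) * (vandermonde v).det := by
    rw [← det_transpose (vandermonde v)]
    exact det_mul_row (fun j => (u j : ℂ)) (vandermonde v)ᵀ
  rw [hstar, det_conjTranspose, hweight, Complex.ofReal_mul, Complex.ofReal_pow,
    ← Complex.conj_mul', Complex.ofReal_prod]
  simp only [starRingEnd_apply]
  ring

theorem coulombPartitionFunction_eq_det_momentMatrix [SigmaFinite μ]
    (hint : ∀ i j : ℕ, Integrable (fun x => star (f x) ^ i * (w x * f x ^ j)) μ) (n : ℕ) :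
    (coulombPartitionFunction μ f w n : ℂ) = (momentMatrix μ f w n).det := by
  have handreief := integral_det_mul_det (ι := Fin n) fun i j => hint i j
  simp only [det_star_pow_mul_det_weighted_pow, norm_det_vandermonde_sq, integral_complex_ofReal,
    Fintype.card_fin] at handreief
  rw [coulombPartitionFunction, Complex.ofReal_mul, handreief, momentMatrix]
  push_cast
  rw [inv_mul_cancel_left₀ (by exact_mod_cast n.factorial_ne_zero)]

lemma star_dotProduct_momentMatrix_mulVec
    (hint : ∀ i j : ℕ, Integrable (fun x => star (f x) ^ i * (w x * f x ^ j)) μ) {n : ℕ}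
    (v : Fin n → ℂ) :
    star v ⬝ᵥ momentMatrix μ f w n *ᵥ v =
      ((∫ x, ‖∑ i, v i * f x ^ (i : ℕ)‖ ^ 2 * w x ∂μ : ℝ) : ℂ) := by
  have hpt (x : α) : ((‖∑ i, v i * f x ^ (i : ℕ)‖ ^ 2 * w x : ℝ) : ℂ) =
      ∑ i, ∑ j, star (v i) * v j * (star (f x) ^ (i : ℕ) * (w x * f x ^ (j : ℕ))) := by
    rw [Complex.ofReal_mul, Complex.ofReal_pow, ← Complex.conj_mul', map_sum, Finset.sum_mul_sum,
      Finset.sum_mul]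
    refine Finset.sum_congr rfl fun i _ => ?_
    rw [Finset.sum_mul]
    refine Finset.sum_congr rfl fun j _ => ?_
    simp only [map_mul, map_pow, starRingEnd_apply]
    ring
  have hterm (i j : Fin n) : Integrable
      (fun x => star (v i) * v j * (star (f x) ^ (i : ℕ) * (w x * f x ^ (j : ℕ)))) μ :=
    (hint i j).const_mul _
  simp only [← integral_complex_ofReal, hpt]
  rw [integral_finsetSum _ fun i _ => integrable_finsetSum _ fun j _ => hterm i j]
  simp only [dotProduct, mulVec, momentMatrix, of_apply, Pi.star_apply, Finset.mul_sum]
  refine Finset.sum_congr rfl fun i _ => ?_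
  rw [integral_finsetSum _ fun j _ => hterm i j]
  refine Finset.sum_congr rfl fun j _ => ?_
  rw [integral_const_mul]
  ring

variable [SigmaFinite μ]

theorem mul_coulombPartitionFunction_le_succ
    (hint : ∀ i j : ℕ, Integrable (fun x => star (f x) ^ i * (w x * f x ^ j)) μ) {n : ℕ} {c : ℝ}
    (hc : ∀ v : Fin (n + 1) → ℂ,
      c * ‖v (Fin.last n)‖ ^ 2 ≤ ∫ x, ‖∑ i, v i * f x ^ (i : ℕ)‖ ^ 2 * w x ∂μ)
    (hpos : 0 < coulombPartitionFunction μ f w n) :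
    c * coulombPartitionFunction μ f w n ≤ coulombPartitionFunction μ f w (n + 1) := by
  open scoped ComplexOrder in
  have hdet := mul_det_submatrix_succAbove_le_det (G := momentMatrix μ f w (n + 1)) (c := (c : ℂ))
    (Fin.last n) (fun v => ?_) ?_
  · rw [momentMatrix_submatrix_last_succAbove, ← coulombPartitionFunction_eq_det_momentMatrix hint,
      ← coulombPartitionFunction_eq_det_momentMatrix hint] at hdet
    exact_mod_cast hdet
  · rw [star_dotProduct_momentMatrix_mulVec hint, ← starRingEnd_apply, Complex.conj_mul']
    exact_mod_cast hc v
  · rw [momentMatrix_submatrix_last_succAbove, ← coulombPartitionFunction_eq_det_momentMatrix hint]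
    exact_mod_cast hpos

theorem coulombPartitionFunction_pos
    (hint : ∀ i j : ℕ, Integrable (fun x => star (f x) ^ i * (w x * f x ^ j)) μ) {c : ℕ → ℝ}
    (hc0 : ∀ n, 0 < c n)
    (hc : ∀ n (v : Fin (n + 1) → ℂ),
      c n * ‖v (Fin.last n)‖ ^ 2 ≤ ∫ x, ‖∑ i, v i * f x ^ (i : ℕ)‖ ^ 2 * w x ∂μ) (n : ℕ) :
    0 < coulombPartitionFunction μ f w n := by
  induction n with
  | zero => simp [coulombPartitionFunction, measureReal_def]
  | succ n ih =>
    exact (mul_pos (hc0 n) ih).trans_le (mul_coulombPartitionFunction_le_succ hint (hc n) ih)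

end CoulombGas

section ExteriorDomain

open Bornology Metric Topology

lemma isOpen_lt_norm (R : ℝ) : IsOpen {z : ℂ | R < ‖z‖} :=
  isOpen_lt continuous_const continuous_norm

lemma norm_circleAverage_le_circleAverage_norm {E : Type*} [NormedAddCommGroup E] [NormedSpace ℝ E]
    (F : ℂ → E) (c : ℂ) (r : ℝ) :
    ‖Real.circleAverage F c r‖ ≤ Real.circleAverage (fun z => ‖F z‖) c r := by
  rw [Real.circleAverage_def, Real.circleAverage_def, norm_smul,
    Real.norm_of_nonneg (by positivity), smul_eq_mul]
  gcongr
  exact intervalIntegral.norm_integral_le_integral_norm Real.two_pi_pos.le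

variable {E : Type*} [NormedAddCommGroup E] [NormedSpace ℂ E]

lemma circleAverage_eq_of_differentiableOn_lt_norm {F : ℂ → E} {R r ρ : ℝ} (hr : 0 < r)
    (hRr : R < r) (hrρ : r ≤ ρ) (hF : DifferentiableOn ℂ F {z | R < ‖z‖}) :
    Real.circleAverage F 0 ρ = Real.circleAverage F 0 r := by
  rw [Real.circleAverage_eq_circleIntegral (hr.trans_le hrρ).ne',
    Real.circleAverage_eq_circleIntegral hr.ne',
    Complex.circleIntegral_sub_center_inv_smul_eq_of_differentiable_on_annulus_off_countable
      hr hrρ Set.countable_empty (hF.continuousOn.mono ?_) fun z hz => ?_]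
  · rintro z ⟨-, hz⟩
    simp only [mem_ball_zero_iff, not_lt] at hz
    exact hRr.trans_le hz
  · simp only [Set.mem_sdiff, mem_closedBall_zero_iff, not_le] at hz
    exact hF.differentiableAt ((isOpen_lt_norm R).mem_nhds (hRr.trans hz.1.2))

lemma tendsto_circleAverage_atTop {F : ℂ → E} {R : ℝ} {L : E} [CompleteSpace E]
    (hF : ContinuousOn F {z | R < ‖z‖}) (hL : Tendsto F (cobounded ℂ) (𝓝 L)) :
    Tendsto (Real.circleAverage F 0) atTop (𝓝 L) := by
  have hnorm : ∀ᶠ ρ : ℝ in atTop, ∀ θ, ‖circleMap 0 ρ θ‖ = ρ := by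
    filter_upwards [eventually_ge_atTop 0] with ρ hρ θ
    rw [norm_circleMap_zero, abs_of_nonneg hρ]
  have hcob (θ : ℝ) : Tendsto (circleMap 0 · θ) atTop (cobounded ℂ) := by
    rw [← tendsto_norm_atTop_iff_cobounded]
    exact tendsto_id.congr' (hnorm.mono fun ρ h => (h θ).symm)
  have hint : Tendsto (fun ρ => ∫ θ in 0..2 * Real.pi, F (circleMap 0 ρ θ)) atTop
      (𝓝 (∫ _ in 0..2 * Real.pi, L)) := by
    obtain ⟨ρ₀, -, hρ₀⟩ := hasBasis_cobounded_norm.eventually_iff.1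
      (hL.norm.eventually_le_const (lt_add_one ‖L‖))
    refine intervalIntegral.tendsto_integral_filter_of_dominated_convergence (fun _ => ‖L‖ + 1)
      ?_ ?_ intervalIntegrable_const (ae_of_all _ fun θ _ => hL.comp (hcob θ))
    · filter_upwards [hnorm, eventually_gt_atTop R] with ρ hρ hRρ
      exact (hF.comp_continuous (continuous_circleMap 0 ρ)
        fun θ => by simpa [hρ θ] using hRρ).aestronglyMeasurable
    · filter_upwards [hnorm, eventually_ge_atTop ρ₀] with ρ hρ hρ₀ρ
      exact ae_of_all _ fun θ _ => hρ₀ (hρ₀ρ.trans_eq (hρ θ).symm)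
  have hconst : (2 * Real.pi)⁻¹ • ∫ _ in 0..2 * Real.pi, L = L := by
    rw [intervalIntegral.integral_const, sub_zero, inv_smul_smul₀ Real.two_pi_pos.ne']
  exact hconst ▸ hint.const_smul (2 * Real.pi)⁻¹

theorem circleAverage_eq_of_tendsto_cobounded {F : ℂ → E} {R r : ℝ} {L : E} [CompleteSpace E]
    (hr : 0 < r) (hRr : R < r) (hF : DifferentiableOn ℂ F {z | R < ‖z‖})
    (hL : Tendsto F (cobounded ℂ) (𝓝 L)) : Real.circleAverage F 0 r = L := by
  refine tendsto_nhds_unique (tendsto_const_nhds.congr' ?_)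
    (tendsto_circleAverage_atTop hF.continuousOn hL)
  filter_upwards [eventually_ge_atTop r] with ρ hρ
  exact (circleAverage_eq_of_differentiableOn_lt_norm hr hRr hρ hF).symm

lemma isLittleO_deriv_cobounded {h : ℂ → E} {R : ℝ} (hh : DifferentiableOn ℂ h {z | R < ‖z‖})
    (ho : h =o[cobounded ℂ] (fun z => z)) : deriv h =o[cobounded ℂ] (fun _ => (1 : ℝ)) := by
  rw [Asymptotics.isLittleO_iff] at ho ⊢
  intro ε hε
  obtain ⟨ρ, -, hρ⟩ := hasBasis_cobounded_norm.eventually_iff.1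
    (ho (show 0 < ε / 3 by positivity))
  filter_upwards [eventually_cobounded_le_norm (2 * max ρ (|R| + 1))] with z hz
  have hρz : ρ ≤ ‖z‖ / 2 := by linarith [le_max_left ρ (|R| + 1)]
  have hRz : |R| < ‖z‖ / 2 := by linarith [le_max_right ρ (|R| + 1)]
  have hz0 : 0 < ‖z‖ / 2 := (abs_nonneg R).trans_lt hRz
  have hlow {u : ℂ} (hu : u ∈ closedBall z (‖z‖ / 2)) : ‖z‖ / 2 ≤ ‖u‖ := by
    linarith [norm_sub_norm_le z u, mem_closedBall_iff_norm'.1 hu]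
  have hdiff : DifferentiableOn ℂ h (closedBall z (‖z‖ / 2)) :=
    hh.mono fun u hu => ((le_abs_self R).trans_lt hRz).trans_le (hlow hu)
  have hbound (u : ℂ) (hu : u ∈ sphere z (‖z‖ / 2)) : ‖h u‖ ≤ ε * (‖z‖ / 2) := by
    have hu' : ‖u‖ ≤ 3 * (‖z‖ / 2) := by
      linarith [norm_sub_norm_le u z, mem_sphere_iff_norm.1 hu]
    calc ‖h u‖ ≤ ε / 3 * ‖u‖ := hρ (hρz.trans (hlow (sphere_subset_closedBall hu)))
      _ ≤ ε / 3 * (3 * (‖z‖ / 2)) := by gcongr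
      _ = ε * (‖z‖ / 2) := by ring
  simpa [mul_div_cancel_right₀ _ hz0.ne'] using
    Complex.norm_deriv_le_of_forall_mem_sphere_norm_le hz0
      (hdiff.diffContOnCl_ball subset_rfl) hbound

lemma tendsto_deriv_cobounded {φ : ℂ → ℂ} {R : ℝ} {a : ℂ}
    (hφ : DifferentiableOn ℂ φ {z | R < ‖z‖})
    (ha : Tendsto (fun z => φ z / z) (cobounded ℂ) (𝓝 a)) :
    Tendsto (deriv φ) (cobounded ℂ) (𝓝 a) := by
  have hsub : (fun z => φ z - a * z) =o[cobounded ℂ] (fun z => z) := by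
    rw [Asymptotics.isLittleO_iff_tendsto'
      ((eventually_ne_cobounded 0).mono fun z hz h => absurd h hz)]
    refine (tendsto_sub_nhds_zero_iff.2 ha).congr' ?_
    filter_upwards [eventually_ne_cobounded 0] with z hz
    field_simp
  have hderiv := (Asymptotics.isLittleO_one_iff ℝ).1
    (isLittleO_deriv_cobounded (R := R) (by fun_prop) hsub)
  refine tendsto_sub_nhds_zero_iff.1 (hderiv.congr' ?_)
  filter_upwards [eventually_cobounded_le_norm (R + 1)] with z hz
  have hφz : DifferentiableAt ℂ φ z :=
    hφ.differentiableAt ((isOpen_lt_norm R).mem_nhds ((lt_add_one R).trans_le hz))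
  rw [deriv_fun_sub hφz (by fun_prop), deriv_const_mul_field, deriv_id'', mul_one]

lemma tendsto_sum_pow_div_pow_cobounded {φ : ℂ → ℂ} {a : ℂ}
    (ha : Tendsto (fun z => φ z / z) (cobounded ℂ) (𝓝 a)) {n : ℕ} (v : Fin (n + 1) → ℂ) :
    Tendsto (fun z => (∑ i, v i * φ z ^ (i : ℕ)) / z ^ n) (cobounded ℂ)
      (𝓝 (v (Fin.last n) * a ^ n)) := by
  have hterm (i : Fin (n + 1)) : Tendsto (fun z => v i * (φ z / z) ^ (i : ℕ) * z⁻¹ ^ (n - i : ℕ))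
      (cobounded ℂ) (𝓝 (v i * a ^ (i : ℕ) * 0 ^ (n - i : ℕ))) :=
    ((ha.pow _).const_mul _).mul (tendsto_inv₀_cobounded.pow _)
  have hsum := tendsto_finsetSum Finset.univ fun i _ => hterm i
  have hlim : ∑ i : Fin (n + 1), v i * a ^ (i : ℕ) * 0 ^ (n - i : ℕ) = v (Fin.last n) * a ^ n := by
    rw [Finset.sum_eq_single (Fin.last n)]
    · simp
    · intro i _ hi
      rw [zero_pow (Nat.sub_ne_zero_of_lt (Fin.val_lt_last hi)), mul_zero]
    · simp
  rw [hlim] at hsum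
  refine hsum.congr' ?_
  filter_upwards [eventually_ne_cobounded 0] with z hz
  rw [Finset.sum_div]
  refine Finset.sum_congr rfl fun i _ => ?_
  rw [div_pow, inv_pow, ← pow_mul_pow_sub z i.is_le]
  field_simp

lemma tendsto_tsum_zpow_cobounded {c : ℕ → ℂ} {w : ℂ} (hw : w ≠ 0)
    (hc : Summable fun k : ℕ => ‖c k * w ^ (-(k : ℤ) - 1)‖) :
    Tendsto (fun z : ℂ => ∑' k : ℕ, c k * z ^ (-(k : ℤ) - 1)) (cobounded ℂ) (𝓝 0) := by
  have hpow (z : ℂ) (k : ℕ) : z ^ (-(k : ℤ) - 1) = z⁻¹ ^ (k + 1) := by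
    rw [← neg_add', zpow_neg, inv_pow]
    norm_cast
  simp only [hpow] at hc ⊢
  have hterm (k : ℕ) : Tendsto (fun z : ℂ => c k * z⁻¹ ^ (k + 1)) (cobounded ℂ) (𝓝 0) := by
    simpa using (tendsto_inv₀_cobounded.pow (k + 1)).const_mul (c k)
  have hdom : ∀ᶠ z : ℂ in cobounded ℂ, ∀ k, ‖c k * z⁻¹ ^ (k + 1)‖ ≤ ‖c k * w⁻¹ ^ (k + 1)‖ := by
    filter_upwards [eventually_cobounded_le_norm ‖w‖] with z hz k
    simp only [norm_mul, norm_pow, norm_inv]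
    have := norm_pos_iff.2 hw
    gcongr
  simpa using tendsto_tsum_of_dominated_convergence hc hterm hdom

lemma tendsto_div_cobounded_of_laurent {φ : ℂ → ℂ} {φ₀ : ℂ} {c : ℕ → ℂ} {R : ℝ}
    (hφ : ∀ z : ℂ, R < ‖z‖ → Summable (fun k : ℕ => ‖c k * z ^ (-(k : ℤ) - 1)‖) ∧
      φ z = z + φ₀ + ∑' k : ℕ, c k * z ^ (-(k : ℤ) - 1)) :
    Tendsto (fun z => φ z / z) (cobounded ℂ) (𝓝 1) := by
  obtain ⟨w, hwR, hw⟩ := ((eventually_cobounded_le_norm (E := ℂ) (R + 1)).and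
    (eventually_ne_cobounded 0)).exists
  have htail := tendsto_tsum_zpow_cobounded hw (hφ w ((lt_add_one R).trans_le hwR)).1
  have hlim := ((htail.const_add φ₀).mul tendsto_inv₀_cobounded).const_add 1
  rw [mul_zero, add_zero] at hlim
  refine hlim.congr' ?_
  filter_upwards [eventually_cobounded_le_norm (R + 1), eventually_ne_cobounded 0] with z hzR hz
  rw [(hφ z ((lt_add_one R).trans_le hzR)).2]
  field_simp
  ring

end ExteriorDomain

section LoewnerEnergy

open Bornology Topology Real

variable {φ : ℂ → ℂ} {R r : ℝ}

lemma integral_Icc_neg_pi_pi_circleMap {E : Type*} [NormedAddCommGroup E] [NormedSpace ℝ E]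
    (F : ℂ → E) (c : ℂ) (r : ℝ) :
    ∫ θ in Set.Icc (-π) π, F (circleMap c r θ) = (2 * π) • circleAverage F c r := by
  rw [circleAverage_eq_integral_add (-π), smul_inv_smul₀ two_pi_pos.ne',
    intervalIntegral.integral_comp_add_right (fun θ => F (circleMap c r θ)),
    integral_Icc_eq_integral_Ioc, ← intervalIntegral.integral_of_le (by linarith [pi_pos])]
  congr 1 <;> ring

lemma continuous_comp_circleMap_zero {X : Type*} [TopologicalSpace X] {F : ℂ → X} (hr : 0 < r)
    (hRr : R < r) (hF : ContinuousOn F {z | R < ‖z‖}) : Continuous fun θ => F (circleMap 0 r θ) :=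
  hF.comp_continuous (continuous_circleMap 0 r) fun θ => by
    simpa [abs_of_pos hr] using hRr

lemma integrableOn_moment_circleMap (hr : 0 < r) (hRr : R < r)
    (hφ : DifferentiableOn ℂ φ {z | R < ‖z‖}) (i j : ℕ) :
    IntegrableOn (fun θ => star (φ (circleMap 0 r θ)) ^ i *
      ((‖deriv φ (circleMap 0 r θ)‖ : ℝ) * φ (circleMap 0 r θ) ^ j)) (Set.Icc (-π) π) := by
  have hcont := continuous_comp_circleMap_zero hr hRr hφ.continuousOn
  have hderiv :=
    continuous_comp_circleMap_zero hr hRr (hφ.deriv (isOpen_lt_norm R)).continuousOn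
  exact ((hcont.star.pow i).mul ((Complex.continuous_ofReal.comp hderiv.norm).mul
    (hcont.pow j))).integrableOn_Icc

theorem mul_norm_sq_le_integral_norm_sum_pow_sq_mul_norm_deriv (hr : 0 < r) (hRr : R < r)
    (hφ : DifferentiableOn ℂ φ {z | R < ‖z‖})
    (hlim : Tendsto (fun z => φ z / z) (cobounded ℂ) (𝓝 1)) (n : ℕ) (v : Fin (n + 1) → ℂ) :
    2 * π * r ^ (2 * n) * ‖v (Fin.last n)‖ ^ 2 ≤
      ∫ θ in Set.Icc (-π) π,
        ‖∑ i, v i * φ (circleMap 0 r θ) ^ (i : ℕ)‖ ^ 2 * ‖deriv φ (circleMap 0 r θ)‖ := by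
  set F : ℂ → ℂ := fun z => ((∑ i, v i * φ z ^ (i : ℕ)) / z ^ n) ^ 2 * deriv φ z with hF
  have hFlim : Tendsto F (cobounded ℂ) (𝓝 (v (Fin.last n) ^ 2)) := by
    simpa using ((tendsto_sum_pow_div_pow_cobounded hlim v).pow 2).mul
      (tendsto_deriv_cobounded hφ hlim)
  have hFdiff : DifferentiableOn ℂ F {z | max R 0 < ‖z‖} := by
    have hφ' := hφ.mono fun z (hz : max R 0 < ‖z‖) => (le_max_left R 0).trans_lt hz
    have hderiv := hφ'.deriv (isOpen_lt_norm _)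
    have hne (z : ℂ) (hz : max R 0 < ‖z‖) : z ^ n ≠ 0 :=
      pow_ne_zero n (norm_pos_iff.1 ((le_max_right R 0).trans_lt hz))
    fun_prop (disch := assumption)
  have hFnorm (θ : ℝ) : ‖F (circleMap 0 r θ)‖ = (r ^ (2 * n))⁻¹ *
      (‖∑ i, v i * φ (circleMap 0 r θ) ^ (i : ℕ)‖ ^ 2 * ‖deriv φ (circleMap 0 r θ)‖) := by
    simp only [hF, norm_mul, norm_pow, norm_div, norm_circleMap_zero, abs_of_pos hr]
    rw [div_pow, ← pow_mul, mul_comm n 2]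
    ring
  have hmean : ‖v (Fin.last n)‖ ^ 2 ≤ circleAverage (fun z => ‖F z‖) 0 r := by
    rw [← norm_pow, ← circleAverage_eq_of_tendsto_cobounded hr (max_lt hRr hr) hFdiff hFlim]
    exact norm_circleAverage_le_circleAverage_norm F 0 r
  calc 2 * π * r ^ (2 * n) * ‖v (Fin.last n)‖ ^ 2
      ≤ 2 * π * r ^ (2 * n) * circleAverage (fun z => ‖F z‖) 0 r := by gcongr
    _ = r ^ (2 * n) * ∫ θ in Set.Icc (-π) π, ‖F (circleMap 0 r θ)‖ := by
      rw [integral_Icc_neg_pi_pi_circleMap fun z => ‖F z‖, smul_eq_mul]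
      ring
    _ = ∫ θ in Set.Icc (-π) π,
        ‖∑ i, v i * φ (circleMap 0 r θ) ^ (i : ℕ)‖ ^ 2 * ‖deriv φ (circleMap 0 r θ)‖ := by
      simp only [hFnorm]
      rw [integral_const_mul, mul_inv_cancel_left₀ (by positivity)]

lemma Zn_eq_coulombPartitionFunction_div (φ : ℂ → ℂ) (n : ℕ) (r : ℝ) :
    Zn φ n r = coulombPartitionFunction (volume.restrict (Set.Icc (-π) π))
      (fun θ => φ (circleMap 0 r θ)) (fun θ => ‖deriv φ (circleMap 0 r θ)‖) n /
        r ^ (n * (n - 1)) := by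
  simp only [Zn, coulombPartitionFunction, volume_pi, Measure.restrict_pi_pi, circleMap, zero_add,
    mul_comm Complex.I]
  ring

lemma Zn_pos (hr : 0 < r) (hRr : R < r) (hφ : DifferentiableOn ℂ φ {z | R < ‖z‖})
    (hlim : Tendsto (fun z => φ z / z) (cobounded ℂ) (𝓝 1)) (n : ℕ) : 0 < Zn φ n r := by
  rw [Zn_eq_coulombPartitionFunction_div]
  exact div_pos (coulombPartitionFunction_pos (integrableOn_moment_circleMap hr hRr hφ)
    (fun n => by positivity)
    (mul_norm_sq_le_integral_norm_sum_pow_sq_mul_norm_deriv hr hRr hφ hlim) n) (by positivity)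

lemma two_pi_mul_Zn_le_Zn_succ (hr : 0 < r) (hRr : R < r)
    (hφ : DifferentiableOn ℂ φ {z | R < ‖z‖})
    (hlim : Tendsto (fun z => φ z / z) (cobounded ℂ) (𝓝 1)) (n : ℕ) :
    2 * π * Zn φ n r ≤ Zn φ (n + 1) r := by
  have hpos := Zn_pos hr hRr hφ hlim n
  have hexp : (n + 1) * (n + 1 - 1) = 2 * n + n * (n - 1) := by
    cases n <;> grind
  rw [Zn_eq_coulombPartitionFunction_div, div_pos_iff_of_pos_right (by positivity)] at hpos
  rw [Zn_eq_coulombPartitionFunction_div, Zn_eq_coulombPartitionFunction_div, hexp, pow_add,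
    ← div_div]
  have hle := mul_coulombPartitionFunction_le_succ (integrableOn_moment_circleMap hr hRr hφ)
    (mul_norm_sq_le_integral_norm_sum_pow_sq_mul_norm_deriv hr hRr hφ hlim n) hpos
  rw [← mul_div_assoc]
  gcongr
  rw [le_div_iff₀ (by positivity)]
  linarith

theorem stmt14_general (hφ : DifferentiableOn ℂ φ {z | R < ‖z‖})
    (hlim : Tendsto (fun z => φ z / z) (cobounded ℂ) (𝓝 1)) (hr : 0 < r) (hRr : R < r) :
    Monotone fun n => En φ n r := by
  refine monotone_nat_of_le_succ fun n => log_le_log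
    (div_pos (Zn_pos hr hRr hφ hlim n) (by positivity)) ?_
  rw [div_le_div_iff₀ (by positivity) (by positivity), pow_succ']
  calc Zn φ n r * (2 * π * (2 * π) ^ n) = 2 * π * Zn φ n r * (2 * π) ^ n := by ring
    _ ≤ Zn φ (n + 1) r * (2 * π) ^ n := by
      gcongr
      exact two_pi_mul_Zn_le_Zn_succ hr hRr hφ hlim n

end LoewnerEnergy

/-- For a univalent `φ` on the exterior disk with hydrodynamic
normalization and every `r > 1`, the sequence `n ↦ E_n(r)` is nondecreasing. -/
theorem stmt14 (φ : ℂ → ℂ) (φ₀ : ℂ) (c : ℕ → ℂ)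
    (hφ : DifferentiableOn ℂ φ {z : ℂ | 1 < ‖z‖})
    (hinj : Set.InjOn φ {z : ℂ | 1 < ‖z‖})
    (hLaurent : ∀ z : ℂ, 1 < ‖z‖ →
      Summable (fun k : ℕ => ‖c k * z ^ (-(k : ℤ) - 1)‖) ∧
      φ z = z + φ₀ + ∑' k : ℕ, c k * z ^ (-(k : ℤ) - 1)) :
    ∀ r : ℝ, 1 < r → ∀ n : ℕ, 1 ≤ n → En φ n r ≤ En φ (n + 1) r :=
  fun _ hr n _ => stmt14_general hφ (tendsto_div_cobounded_of_laurent hLaurent)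
    (zero_lt_one.trans hr) hr n.le_succ
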